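/- arXiv:2301.03889 — 3 statements merged into one kernel-verified Lean document; each statement's English description precedes it below -/
import Mathlib

section
/- Unforgeable polynomials (Theorem 6, counting form): Let p be a prime, F = ZMod p, and fix d, D ∈ ℕ and π ∈ F[X] with natDegree π ≤ d. Consider the finite sample space Ω of tuples (a, b, w, g) with a ∈ F \ {0}, b ∈ F, w ∈ F^{d+1}, g ∈ F^{2d+2}; for such a tuple set ζ = a·X + b, ω = Σ_{i=0}^{d} w_i·X^i, γ = Σ_{i=0}^{2d+1} g_i·X^i, and θ = ζ·ω·π + γ. Let A : F[X] → F[X] be an arbitrary function (the adversary, which sees only θ and the public π) with natDegree (A f) ≤ D for every f. Then p · #{(a, b, w, g) ∈ Ω : A(θ) ≠ θ and ζ divides A(θ) − γ} ≤ max(D, 2d+1) · #Ω; equivalently, when (ζ, ω, γ) are sampled uniformly as above, the probability that the adversary's forged polynomial δ = A(θ) satisfies δ ≠ θ and ζ ∣ (δ − γ) is at most max(D, 2d+1)/p. -/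
open Polynomial

/-!
Fix `a`, `ω` and `θ`. Every `b` is compatible with exactly one mask `γ`, namely `θ - ζ * ω * π`, so
`b` is still uniformly distributed. Since `ζ` divides `θ - γ`, the adversary wins exactly when
`A θ - θ` is nonzero and divisible by `ζ`, that is, when it is nonzero and the root `-b / a` of `ζ`
is one of its roots, of which there are at most as many as its degree.
-/

lemma ncard_eq_sum_ncard_of_equiv_prod {α β κ : Type*} [Fintype κ] [Finite β] (e : κ × β ≃ α)
    (E : Set α) : E.ncard = ∑ k, {b | e (k, b) ∈ E}.ncard :=
  calc E.ncard = Nat.card {x : κ × β // e (x.1, x.2) ∈ E} :=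
        Nat.card_congr (e.subtypeEquivOfSubtype (p := (· ∈ E))).symm
    _ = Nat.card ((k : κ) × {b // e (k, b) ∈ E}) :=
        Nat.card_congr (Equiv.subtypeProdEquivSigmaSubtype fun k b => e (k, b) ∈ E)
    _ = ∑ k, {b | e (k, b) ∈ E}.ncard := Nat.card_sigma

lemma ofFn_eq_sum_C_mul_X_pow {R : Type*} [Semiring R] [DecidableEq R] {n : ℕ} (v : Fin n → R) :
    ofFn n v = ∑ i, C (v i) * X ^ (i : ℕ) := by
  simp only [ofFn_eq_sum_monomial, C_mul_X_pow_eq_monomial]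

lemma natDegree_linear_mul_mul_le {R : Type*} [Semiring R] (a b : R) (ω π : R[X]) :
    ((C a * X + C b) * ω * π).natDegree ≤ 1 + ω.natDegree + π.natDegree :=
  natDegree_mul_le_of_le (natDegree_mul_le_of_le natDegree_linear_le le_rfl) le_rfl

lemma ofFn_sub_toFn {R : Type*} [Ring R] [DecidableEq R] {n : ℕ} (v : Fin n → R) {q : R[X]}
    (hq : q.natDegree < n) : ofFn n (v - toFn n q) = ofFn n v - q := by
  rw [map_sub, ofFn_comp_toFn_eq_id_of_natDegree_lt hq]

lemma ncard_linear_dvd_le_natDegree {F : Type*} [Field F] {a : F} (ha : a ≠ 0) {q : F[X]}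
    (hq : q ≠ 0) : {b | C a * X + C b ∣ q}.ncard ≤ q.natDegree := by
  have root_mem (b : F) (hb : C a * X + C b ∣ q) : -b / a ∈ q.rootSet F := by
    have root_linear : (C a * X + C b).IsRoot (-b / a) := by
      simp [mul_div_cancel₀ _ ha]
    exact mem_rootSet.2 ⟨hq, root_linear.dvd hb⟩
  have root_injective : Function.Injective fun b : F => -b / a :=
    fun b c h => neg_injective ((div_left_inj' ha).1 h)
  exact (Set.ncard_le_ncard_of_injOn _ root_mem root_injective.injOn (rootSet_finite q F)).trans
    (ncard_rootSet_le q F)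

lemma ncard_linear_forgery_le {F : Type*} [Field F] {a : F} (ha : a ≠ 0) {D n : ℕ}
    {δ θ : F[X]} (hδ : δ.natDegree ≤ D) (hθ : θ.natDegree ≤ n) (ω π : F[X]) :
    {b | δ ≠ θ ∧ C a * X + C b ∣ δ - (θ - (C a * X + C b) * ω * π)}.ncard ≤ max D n := by
  have dvd_iff (b : F) :
      C a * X + C b ∣ δ - (θ - (C a * X + C b) * ω * π) ↔ C a * X + C b ∣ δ - θ := by
    rw [← sub_add, dvd_add_left ((dvd_mul_right _ _).mul_right _)]
  by_cases hne : δ = θ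
  · simp [hne]
  simp only [ne_eq, hne, not_false_eq_true, true_and, dvd_iff]
  exact (ncard_linear_dvd_le_natDegree ha (sub_ne_zero.2 hne)).trans
    (natDegree_sub_le_of_le hδ hθ)

/-- The change of variables `((a, w, t), b) ↦ (a, b, w, g)` in which the coefficients `g` of the
mask are replaced by the first `n` coefficients `t` of the published polynomial `ζ * ω * π + γ`.
The published data and `b` are thereby independent coordinates on the sample space. -/
noncomputable def maskEquiv {R : Type*} [Ring R] [DecidableEq R] {m n : ℕ} (π : R[X]) :
    (R × (Fin m → R) × (Fin n → R)) × R ≃ R × R × (Fin m → R) × (Fin n → R) where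
  toFun := fun ((a, w, t), b) => (a, b, w, t - toFn n ((C a * X + C b) * ofFn m w * π))
  invFun := fun (a, b, w, g) => ((a, w, toFn n ((C a * X + C b) * ofFn m w * π) + g), b)
  left_inv := fun _ => by simp only [add_sub_cancel]
  right_inv := fun _ => by simp only [add_sub_cancel_left]

theorem unforgeable_polynomial_general {F : Type*} [Field F] [Finite F] [DecidableEq F]
    {m n : ℕ} (D : ℕ) (π : F[X]) (hπ : m + π.natDegree < n)
    (A : F[X] → F[X]) (hA : ∀ f, (A f).natDegree ≤ D) :
    Nat.card F * Set.ncard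
        {x : F × F × (Fin (m + 1) → F) × (Fin (n + 1) → F) |
          x.1 ≠ 0 ∧
          (let ζ := C x.1 * X + C x.2.1
           let ω := ofFn (m + 1) x.2.2.1
           let γ := ofFn (n + 1) x.2.2.2
           let θ := ζ * ω * π + γ
           A θ ≠ θ ∧ ζ ∣ (A θ - γ))}
      ≤ max D n * Set.ncard
        {x : F × F × (Fin (m + 1) → F) × (Fin (n + 1) → F) | x.1 ≠ 0} := by
  have := Fintype.ofFinite F
  simp only [ncard_eq_sum_ncard_of_equiv_prod (maskEquiv π), Finset.mul_sum]
  refine Finset.sum_le_sum fun ⟨a, w, t⟩ _ => ?_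
  by_cases ha : a = 0
  · simp [maskEquiv, ha]
  have degree_lt (b : F) : ((C a * X + C b) * ofFn (m + 1) w * π).natDegree < n + 1 := by
    have hω := ofFn_natDegree_lt (Nat.le_add_left 1 m) w
    have hζωπ := natDegree_linear_mul_mul_le a b (ofFn (m + 1) w) π
    omega
  let θ := ofFn (n + 1) t
  have hθ : θ.natDegree ≤ n := Nat.le_of_lt_succ (ofFn_natDegree_lt (Nat.le_add_left 1 n) t)
  have forgery_le : {b | A θ ≠ θ ∧ C a * X + C b ∣
      A θ - (θ - (C a * X + C b) * ofFn (m + 1) w * π)}.ncard ≤ max D n :=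
    ncard_linear_forgery_le ha (hA θ) hθ _ π
  simpa only [maskEquiv, Equiv.coe_fn_mk, Set.mem_ofPred_eq, ne_eq, ha, not_false_eq_true,
    true_and, ofFn_sub_toFn t (degree_lt _), add_sub_cancel, Set.ofPred_true, Set.ncard_univ,
    mul_comm (max D n)] using Nat.mul_le_mul_left (Nat.card F) forgery_le

/-- Unforgeable polynomials (counting form): over `F = ZMod p` (`p` prime), fix
`d, D` and a public polynomial `π` of degree ≤ `d`.  Sample uniformly a tuple
`(a, b, w, g)` with `a ≠ 0`, set `ζ = a·X + b`, `ω = ∑ wᵢ·Xⁱ` (degree ≤ d),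
`γ = ∑ gᵢ·Xⁱ` (degree ≤ 2d+1) and `θ = ζ·ω·π + γ`.  Then for any adversary
`A : F[X] → F[X]` producing outputs of degree ≤ `D`, the proportion of tuples
for which `A θ ≠ θ` yet `ζ ∣ (A θ - γ)` is at most `max D (2d+1) / p`. -/
theorem unforgeable_polynomial (p : ℕ) [Fact p.Prime] (d D : ℕ)
    (π : Polynomial (ZMod p)) (hπ : π.natDegree ≤ d)
    (A : Polynomial (ZMod p) → Polynomial (ZMod p))
    (hA : ∀ f, (A f).natDegree ≤ D) :
    p * Set.ncard
        {x : ZMod p × ZMod p × (Fin (d + 1) → ZMod p) × (Fin (2 * d + 2) → ZMod p) |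
          x.1 ≠ 0 ∧
          (let ζ : Polynomial (ZMod p) := Polynomial.C x.1 * Polynomial.X + Polynomial.C x.2.1
           let ω : Polynomial (ZMod p) := ∑ i, Polynomial.C (x.2.2.1 i) * Polynomial.X ^ (i : ℕ)
           let γ : Polynomial (ZMod p) := ∑ i, Polynomial.C (x.2.2.2 i) * Polynomial.X ^ (i : ℕ)
           let θ : Polynomial (ZMod p) := ζ * ω * π + γ
           A θ ≠ θ ∧ ζ ∣ (A θ - γ))}
      ≤ max D (2 * d + 1) * Set.ncard
        {x : ZMod p × ZMod p × (Fin (d + 1) → ZMod p) × (Fin (2 * d + 2) → ZMod p) |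
          x.1 ≠ 0} := by
  simpa only [ofFn_eq_sum_C_mul_X_pow, Nat.card_zmod] using
    unforgeable_polynomial_general (m := d) (n := 2 * d + 1) D π (by omega) A hA
end

section
/- Unforgeable polynomials' linear combination (Theorem 7, counting form): Let p be a prime, F = ZMod p, and fix d, D, n ∈ ℕ, 1 ≤ t ≤ n, and polynomials π_1, …, π_n ∈ F[X] with natDegree π_j ≤ d for all j. Consider the finite sample space Ω of tuples (a, b, w⃗, g⃗) with a ∈ F \ {0}, b ∈ F, w⃗ = (w_1, …, w_n) ∈ (F^{d+1})^n and g⃗ = (g_1, …, g_n) ∈ (F^{2d+2})^n; set ζ = a·X + b, ω_j = Σ_i (w_j)_i·X^i, γ_j = Σ_i (g_j)_i·X^i, and θ_j = ζ·ω_j·π_j + γ_j. Let A : (F[X])^n → (F[X])^t be an arbitrary function (the adversary, which sees θ_1, …, θ_n and the public π_j's) each of whose output components has natDegree ≤ D, and write (δ_1, …, δ_t) = A(θ_1, …, θ_n). Then p · #{(a, b, w⃗, g⃗) ∈ Ω : Σ_{j=1}^{t} δ_j ≠ Σ_{j=1}^{t} θ_j and ζ divides Σ_{j=1}^{t} δ_j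 + Σ_{j=t+1}^{n} θ_j − Σ_{j=1}^{n} γ_j} ≤ max(D, 2d+1) · #Ω; i.e., the forgery succeeds with probability at most max(D, 2d+1)/p. -/
open Polynomial

lemma ofFn_neg_toFn_add {R : Type*} [Ring R] [DecidableEq R] {n : ℕ} {q : R[X]}
    (hq : q.natDegree < n) (v : Fin n → R) : ofFn n (-toFn n q + v) = ofFn n v - q := by
  rw [map_add, map_neg, ofFn_comp_toFn_eq_id_of_natDegree_lt hq, neg_add_eq_sub]

lemma natDegree_sum_C_mul_X_pow_le {R : Type*} [Semiring R] {m : ℕ} (v : Fin (m + 1) → R) :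
    (∑ i, C (v i) * X ^ (i : ℕ)).natDegree ≤ m :=
  natDegree_sum_le_of_forall_le _ _ fun i _ =>
    (natDegree_C_mul_X_pow_le _ _).trans (Nat.le_of_lt_succ i.isLt)

lemma ncard_setOf_linear_dvd_le {K : Type*} [Field K] {a : K} (ha : a ≠ 0) {q : K[X]}
    (hq : q ≠ 0) : {b : K | C a * X + C b ∣ q}.ncard ≤ q.natDegree := by
  refine le_trans ?_ (ncard_rootSet_le q K)
  refine Set.ncard_le_ncard_of_injOn (fun b => -b / a) (fun b hb => ?_) ?_ (q.rootSet_finite K)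
  · have hroot : (C a * X + C b).IsRoot (-b / a) := by
      simp [IsRoot.def, mul_div_cancel₀ _ ha]
    exact (mem_rootSet_of_ne hq).mpr (hroot.dvd hb)
  · exact fun b _ c _ h => neg_injective ((div_left_inj' ha).mp h)

lemma dvd_add_sum_compl_sub_sum_iff {R ι : Type*} [CommRing R] [Fintype ι] [DecidableEq ι]
    (S : Finset ι) (ζ δ : R) (f θ : ι → R) :
    ζ ∣ δ + ∑ j ∈ Sᶜ, θ j - ∑ j, (θ j - ζ * f j) ↔ ζ ∣ δ - ∑ j ∈ S, θ j := by
  have hcollapse : δ + ∑ j ∈ Sᶜ, θ j - ∑ j, (θ j - ζ * f j)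
      = δ - ∑ j ∈ S, θ j + ζ * ∑ j, f j := by
    rw [Finset.sum_sub_distrib, ← Finset.mul_sum, ← Finset.sum_add_sum_compl S θ]
    ring
  rw [hcollapse, dvd_add_left (dvd_mul_right ζ _)]

lemma ncard_setOf_forgery_le {K ι : Type*} [Field K] [Fintype ι] [DecidableEq ι] {a : K}
    (ha : a ≠ 0) (S : Finset ι) {D m : ℕ} {δ : K[X]} (hδ : δ.natDegree ≤ D) (f : ι → K[X])
    {θ : ι → K[X]} (hθ : ∀ j, (θ j).natDegree ≤ m) :
    {b : K | δ ≠ ∑ j ∈ S, θ j ∧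
      C a * X + C b ∣ δ + ∑ j ∈ Sᶜ, θ j - ∑ j, (θ j - (C a * X + C b) * f j)}.ncard
      ≤ max D m := by
  simp only [dvd_add_sum_compl_sub_sum_iff]
  rcases eq_or_ne δ (∑ j ∈ S, θ j) with h | h
  · simp [h]
  · simp only [ne_eq, h, not_false_eq_true, true_and]
    exact (ncard_setOf_linear_dvd_le ha (sub_ne_zero.mpr h)).trans <|
      (natDegree_sub_le _ _).trans <|
        max_le_max hδ (natDegree_sum_le_of_forall_le _ _ fun j _ => hθ j)

lemma card_mul_ncard_le_of_forall_ncard_fiber_le {X V K : Type*} [Finite V] [Finite K]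
    (e : X ≃ V × K) {M : ℕ} {T : Set V} {B : Set X} (hBT : ∀ x ∈ B, (e x).1 ∈ T)
    (hB : ∀ v ∈ T, {k | e.symm (v, k) ∈ B}.ncard ≤ M) :
    Nat.card K * B.ncard ≤ M * {x | (e x).1 ∈ T}.ncard := by
  classical
  have := Finite.of_equiv _ e.symm
  have hBcard : B.ncard ≤ M * T.ncard := by
    rw [Set.ncard_eq_toFinset_card B, Set.ncard_eq_toFinset_card T]
    refine Finset.card_le_mul_card_image_of_maps_to (f := fun x => (e x).1)
      (fun x hx => by simpa using hBT x (by simpa using hx)) M fun v hv => ?_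
    refine le_trans ?_ (hB v (by simpa using hv))
    rw [← Set.ncard_coe_finset]
    refine Set.ncard_le_ncard_of_injOn (fun x => (e x).2) ?_ ?_
    · rintro x hx
      obtain ⟨hxB, rfl⟩ : x ∈ B ∧ (e x).1 = v := by simpa using hx
      simpa using hxB
    · intro x hx y hy hxy
      have hxv : (e x).1 = v := (Finset.mem_filter.mp hx).2
      have hyv : (e y).1 = v := (Finset.mem_filter.mp hy).2
      exact e.injective (Prod.ext (hxv.trans hyv.symm) hxy)
  have hT : {x | (e x).1 ∈ T}.ncard = T.ncard * Nat.card K := by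
    have hpre : {x | (e x).1 ∈ T} = e ⁻¹' (T ×ˢ Set.univ) := by ext; simp
    rw [hpre, Set.ncard_preimage_of_injective_subset_range e.injective (by simp),
      Set.ncard_prod, Set.ncard_univ]
  calc Nat.card K * B.ncard ≤ Nat.card K * (M * T.ncard) := by gcongr
    _ = M * {x | (e x).1 ∈ T}.ncard := by rw [hT]; ring

/-- Coordinates on a sample space of tuples `(a, b, w, g)` that split off the secret `b` from the
view `(a, w, h)`, in which `h = s a b w + g` is the message `s a b w` masked by `g`. -/
def maskedViewEquiv {α β W G : Type*} [AddGroup G] (s : α → β → W → G) :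
    α × β × W × G ≃ (α × W × G) × β where
  toFun x := ((x.1, x.2.2.1, s x.1 x.2.1 x.2.2.1 + x.2.2.2), x.2.1)
  invFun y := (y.1.1, y.2, y.1.2.1, -s y.1.1 y.2 y.1.2.1 + y.1.2.2)
  left_inv x := by simp
  right_inv y := by simp

theorem unforgeable_polynomials_linear_combination_general {K W ι : Type*} [Field K] [Finite K]
    [DecidableEq K] [Finite W] [Fintype ι] [DecidableEq ι] (m D : ℕ) (S : Finset ι)
    (f : W → ι → K[X]) (hf : ∀ w j, (f w j).natDegree ≤ m)
    (δ : K → W → (ι → K[X]) → K[X]) (hδ : ∀ a w θ, (δ a w θ).natDegree ≤ D) :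
    Nat.card K * Set.ncard
        {x : K × K × W × (ι → Fin (m + 2) → K) |
          x.1 ≠ 0 ∧
          (let ζ : K[X] := C x.1 * X + C x.2.1
           let γ : ι → K[X] := fun j => ofFn (m + 2) (x.2.2.2 j)
           let θ : ι → K[X] := fun j => ζ * f x.2.2.1 j + γ j
           δ x.1 x.2.2.1 θ ≠ ∑ j ∈ S, θ j ∧
           ζ ∣ δ x.1 x.2.2.1 θ + ∑ j ∈ Sᶜ, θ j - ∑ j, γ j)}
      ≤ max D (m + 1) * Set.ncard {x : K × K × W × (ι → Fin (m + 2) → K) | x.1 ≠ 0} := by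
  let s (a b : K) (w : W) (j : ι) : Fin (m + 2) → K := toFn (m + 2) ((C a * X + C b) * f w j)
  refine card_mul_ncard_le_of_forall_ncard_fiber_le (maskedViewEquiv s) (T := {v | v.1 ≠ 0})
    (fun x hx => hx.1) ?_
  rintro ⟨a, w, h⟩ (ha : a ≠ 0)
  have hdeg (b : K) (j : ι) : ((C a * X + C b) * f w j).natDegree < m + 2 :=
    (natDegree_mul_le_of_le natDegree_linear_le (hf w j)).trans_lt (by lia)
  have hmask (b : K) (j : ι) :
      ofFn (m + 2) ((-s a b w + h) j) = ofFn (m + 2) (h j) - (C a * X + C b) * f w j :=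
    ofFn_neg_toFn_add (hdeg b j) (h j)
  simp only [maskedViewEquiv, Equiv.coe_fn_symm_mk, Set.mem_ofPred_eq, ne_eq, ha,
    not_false_eq_true, true_and, hmask, add_sub_cancel]
  exact ncard_setOf_forgery_le ha S (hδ a w _) (f w) fun j =>
    Nat.le_of_lt_succ (ofFn_natDegree_lt (by lia) (h j))

/-- Unforgeable polynomials' linear combination (counting form): over
`F = ZMod p` (`p` prime), with public polynomials `π j` of degree ≤ `d`,
sample `a ≠ 0`, `b`, coefficient vectors `w j` and `g j`, set
`ζ = a·X + b`, `ω j = ∑ᵢ (w j)ᵢ·Xⁱ`, `γ j = ∑ᵢ (g j)ᵢ·Xⁱ` and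
`θ j = ζ·(ω j)·(π j) + γ j`.  For any adversary `A` mapping `(θ_1,…,θ_n)` to
`(δ_1,…,δ_t)` with each `δ_j` of degree ≤ `D`, the proportion of tuples for
which `∑_{j≤t} δ_j ≠ ∑_{j≤t} θ_j` yet
`ζ ∣ (∑_{j≤t} δ_j + ∑_{j>t} θ_j - ∑_j γ_j)` is at most `max D (2d+1) / p`. -/
theorem unforgeable_polynomials_linear_combination (p : ℕ) [Fact p.Prime]
    (d D n t : ℕ) (ht1 : 1 ≤ t) (htn : t ≤ n)
    (π : Fin n → Polynomial (ZMod p)) (hπ : ∀ j, (π j).natDegree ≤ d)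
    (A : (Fin n → Polynomial (ZMod p)) → (Fin t → Polynomial (ZMod p)))
    (hA : ∀ θ j, (A θ j).natDegree ≤ D) :
    p * Set.ncard
        {x : ZMod p × ZMod p × (Fin n → Fin (d + 1) → ZMod p) ×
              (Fin n → Fin (2 * d + 2) → ZMod p) |
          x.1 ≠ 0 ∧
          (let ζ : Polynomial (ZMod p) := Polynomial.C x.1 * Polynomial.X + Polynomial.C x.2.1
           let ω : Fin n → Polynomial (ZMod p) :=
             fun j => ∑ i, Polynomial.C (x.2.2.1 j i) * Polynomial.X ^ (i : ℕ)
           let γ : Fin n → Polynomial (ZMod p) :=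
             fun j => ∑ i, Polynomial.C (x.2.2.2 j i) * Polynomial.X ^ (i : ℕ)
           let θ : Fin n → Polynomial (ZMod p) := fun j => ζ * ω j * π j + γ j
           let δ : Fin t → Polynomial (ZMod p) := A θ
           (∑ j, δ j ≠ ∑ j ∈ Finset.univ.filter (fun j : Fin n => (j : ℕ) < t), θ j) ∧
           ζ ∣ (∑ j, δ j
                + ∑ j ∈ Finset.univ.filter (fun j : Fin n => t ≤ (j : ℕ)), θ j
                - ∑ j, γ j))}
      ≤ max D (2 * d + 1) * Set.ncard
        {x : ZMod p × ZMod p × (Fin n → Fin (d + 1) → ZMod p) ×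
              (Fin n → Fin (2 * d + 2) → ZMod p) |
          x.1 ≠ 0} := by
  simpa only [Nat.card_zmod, ofFn_eq_sum_C_mul_X_pow, Finset.compl_filter, not_lt, mul_assoc] using
    unforgeable_polynomials_linear_combination_general (2 * d) D {j : Fin n | (j : ℕ) < t}
      (fun (w : Fin n → Fin (d + 1) → ZMod p) j => (∑ i, C (w j i) * X ^ (i : ℕ)) * π j)
      (fun w j => (natDegree_mul_le_of_le (natDegree_sum_C_mul_X_pow_le (w j)) (hπ j)).trans_eq
        (two_mul d).symm)
      (fun _ _ θ => ∑ j, A θ j) fun _ _ θ => natDegree_sum_le_of_forall_le _ _ fun j _ => hA θ j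
end

section
/- Completeness of intersection extraction in JUS (step 13): With the setup and notation of the JUS aggregation identity — ζ, ω', π_D, γ' ∈ R[X]; for each C ∈ ι polynomials ω₁^C, ω₂^C, ρ₁^C, ρ₂^C, π_C, γ^C, δ^C, τ^C ∈ R[X] with Σ_{C∈ι} τ^C = 0; ν^C = (ζ·ω₁^C·ω₂^C·π_C + γ^C) + (ζ·ρ₁^C·ρ₂^C·π_D + δ^C) + τ^C; ν^D = ζ·ω'·π_D − Σ_{C∈ι}(γ^C + δ^C) + ζ·γ'; φ = ν^D + Σ_{C∈ι} ν^C — let φ' = φ − ζ·γ'. Then every common root of all input polynomials is a root of the unblinded result: if s ∈ R satisfies π_D.eval s = 0 and π_C.eval s = 0 for every C ∈ ι, then φ'.eval s = 0. -/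
/-!
Only additive cancellation is needed to remove the masks and the blinding. What is left, `φ'`, is a
left linear combination of `π_D` and the `π C`, hence lies in every left ideal containing them; the
polynomials vanishing at `s` form such an ideal, the kernel of evaluation at `s`.
-/

theorem unblinded_aggregate_eq_add_sum {M ι : Type*} [AddCommGroup M] (t : Finset ι) (a b : M)
    (x y γ δ τ : ι → M) (hτ : ∑ C ∈ t, τ C = 0) :
    ((a - ∑ C ∈ t, (γ C + δ C) + b) + ∑ C ∈ t, ((x C + γ C) + (y C + δ C) + τ C)) - b
      = a + ∑ C ∈ t, (x C + y C) := by
  simp only [Finset.sum_add_distrib, hτ]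
  abel

theorem jus_extraction_complete_general {A ι : Type*} [Ring A] (I : Ideal A) (t : Finset ι)
    (ζ ω' πD γ' : A) (ω₁ ω₂ ρ₁ ρ₂ π γ δ τ : ι → A)
    (hτ : ∑ C ∈ t, τ C = 0) (hD : πD ∈ I) (hC : ∀ C ∈ t, π C ∈ I) :
    ((ζ * ω' * πD - ∑ C ∈ t, (γ C + δ C) + ζ * γ')
        + ∑ C ∈ t, ((ζ * ω₁ C * ω₂ C * π C + γ C)
            + (ζ * ρ₁ C * ρ₂ C * πD + δ C) + τ C))
      - ζ * γ' ∈ I := by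
  rw [unblinded_aggregate_eq_add_sum t _ _ _ _ γ δ τ hτ]
  have client_mem : ∀ C ∈ t, ζ * ω₁ C * ω₂ C * π C + ζ * ρ₁ C * ρ₂ C * πD ∈ I := fun C h =>
    I.add_mem (I.mul_mem_left _ (hC C h)) (I.mul_mem_left _ hD)
  exact I.add_mem (I.mul_mem_left _ hD) (I.sum_mem client_mem)

/-- Completeness of intersection extraction in JUS (step 13): with the JUS
aggregate `φ = ν_D + ∑ ν C` (same setup as the aggregation identity, with
`∑ τ C = 0`) and `φ' = φ - ζ·γ'`, every common root `s` of the dealer's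
polynomial `π_D` and of all the clients' polynomials `π C` satisfies
`φ'.eval s = 0`. -/
theorem jus_extraction_complete {R : Type*} [CommRing R] {ι : Type*} (t : Finset ι)
    (ζ ω' πD γ' : Polynomial R)
    (ω₁ ω₂ ρ₁ ρ₂ π γ δ τ : ι → Polynomial R)
    (hτ : ∑ C ∈ t, τ C = 0)
    (s : R) (hD : πD.eval s = 0) (hC : ∀ C ∈ t, (π C).eval s = 0) :
    (((ζ * ω' * πD - ∑ C ∈ t, (γ C + δ C) + ζ * γ')
        + ∑ C ∈ t, ((ζ * ω₁ C * ω₂ C * π C + γ C)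
            + (ζ * ρ₁ C * ρ₂ C * πD + δ C) + τ C))
      - ζ * γ').eval s = 0 :=
  jus_extraction_complete_general (RingHom.ker (Polynomial.evalRingHom s)) t
    ζ ω' πD γ' ω₁ ω₂ ρ₁ ρ₂ π γ δ τ hτ hD hC
end
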